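/- arXiv:2504.11638 — 2 statements merged into one kernel-verified Lean document; each statement's English description precedes it below -/
import Mathlib

section
/- Let N ≥ 1 and 0 ≤ k ≤ N−1, let 0 ≤ a < b be reals, let γ ∈ ℝ, and let P be the product of N copies of the uniform probability measure on [a,b]. Let M_k(x) be the sum of the k largest coordinates of x ∈ [a,b]^N (M_0 = 0). For 0 ≤ j ≤ k define g_j(x) = max( max(min((γ − kx)/(b − x), k), 0) − j, 0 ) for x ∈ [a,b). Then P({x : M_k(x) ≤ γ}) ≤ [N! / ((N−k−1)! (k!)²)] (1/(b−a))^N Σ_{j=0}^{k} (−1)^j C(k,j) ∫_a^b g_j(s)^k (s − a)^{N−k−1} (b − s)^k ds. -/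
open MeasureTheory
open scoped Classical

/-- The uniform probability measure on the interval `[a,b]`. -/
noncomputable def unif (a b : ℝ) : Measure ℝ :=
  (volume (Set.Icc a b))⁻¹ • volume.restrict (Set.Icc a b)

/-- `sumKLargest N k x` is the sum of the `k` largest coordinates of `x : Fin N → ℝ`
(counted with multiplicity); it is `0` for `k = 0`. -/
noncomputable def sumKLargest (N k : ℕ) (x : Fin N → ℝ) : ℝ :=
  (((List.ofFn x).insertionSort (· ≥ ·)).take k).sum

open Set
open scoped ENNReal

/-!
Some coordinate `x i` is a `(k + 1)`-st largest one: `k` of the others lie above it and the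
remaining ones below. Hence `{M_k ≤ γ}` is covered by `N * C(N - 1, k)` cells, in each of which the
pivot `i` and the set of the `k` upper coordinates are fixed. Given `x i = s`, the slice of a cell
is the product of a cube of side `s - a` and the set of points of `[s, b] ^ k` whose coordinates
sum to at most `γ`.

The volume of the latter is the Irwin–Hall formula, a `k`-fold finite difference of the truncated
power `t₊ ^ k`: adding one coordinate integrates over a window of length `b - s`, which commutes
with differences and turns `t₊ ^ k` into a difference of `t₊ ^ (k + 1) / (k + 1)`. The sum lies in
`[k * s, k * b]`, so `γ` may first be clipped to that interval, and the truncated powers become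
`g_j(s) ^ k * (b - s) ^ k`.
-/

section FiniteDifferences

lemma fwdDiff_iter_sub_nsmul {M G : Type*} [AddCommGroup M] [AddCommGroup G] (h : M) (f : M → G)
    (n : ℕ) (y : M) :
    (fwdDiff h)^[n] f (y - n • h) =
      ∑ j ∈ Finset.range (n + 1), ((-1 : ℤ) ^ j * n.choose j) • f (y - j • h) := by
  rw [fwdDiff_iter_eq_sum_shift, ← Finset.sum_range_reflect]
  refine Finset.sum_congr rfl fun j hj => ?_
  have hjn : j ≤ n := Finset.mem_range_succ_iff.mp hj
  rw [Nat.add_sub_cancel, Nat.sub_sub_self hjn, Nat.choose_symm hjn, sub_nsmul _ hjn]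
  congr 2
  abel

variable {E : Type*} [NormedAddCommGroup E] {f : ℝ → E}

lemma intervalIntegrable_comp_add (hf : ∀ x y, IntervalIntegrable f volume x y) (h x y : ℝ) :
    IntervalIntegrable (fun t => f (t + h)) volume x y := by
  simpa using (hf (x + h) (y + h)).comp_add_right h

lemma intervalIntegrable_fwdDiff (hf : ∀ x y, IntervalIntegrable f volume x y) (h x y : ℝ) :
    IntervalIntegrable (fwdDiff h f) volume x y :=
  (intervalIntegrable_comp_add hf h x y).sub (hf x y)

variable [NormedSpace ℝ E]

lemma integral_fwdDiff (hf : ∀ x y, IntervalIntegrable f volume x y) (h w x : ℝ) :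
    ∫ t in x..x + w, fwdDiff h f t = fwdDiff h (fun u => ∫ t in u..u + w, f t) x := by
  calc ∫ t in x..x + w, fwdDiff h f t
      = (∫ t in x..x + w, f (t + h)) - ∫ t in x..x + w, f t :=
        intervalIntegral.integral_sub (intervalIntegrable_comp_add hf h _ _) (hf _ _)
    _ = (∫ t in x + h..x + h + w, f t) - ∫ t in x..x + w, f t := by
        rw [intervalIntegral.integral_comp_add_right, add_right_comm]

lemma integral_fwdDiff_iter (hf : ∀ x y, IntervalIntegrable f volume x y) (h w : ℝ) (n : ℕ)
    (x : ℝ) :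
    ∫ t in x..x + w, (fwdDiff h)^[n] f t = (fwdDiff h)^[n] (fun u => ∫ t in u..u + w, f t) x := by
  induction n generalizing f with
  | zero => rfl
  | succ n ih =>
    rw [Function.iterate_succ_apply, Function.iterate_succ_apply,
      ih (intervalIntegrable_fwdDiff hf h), funext (integral_fwdDiff hf h w)]

end FiniteDifferences

section TruncatedPower

/-- The truncated power `t₊ ^ k` of spline theory. The case distinction, rather than
`max t 0 ^ k`, makes `truncPow 0` the indicator of `[0, ∞)`. -/
noncomputable def truncPow (k : ℕ) (t : ℝ) : ℝ := if 0 ≤ t then t ^ k else 0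

lemma truncPow_eq_max_pow {k : ℕ} {t : ℝ} (h : k ≠ 0 ∨ 0 ≤ t) : truncPow k t = max t 0 ^ k := by
  rcases le_or_gt 0 t with ht | ht
  · rw [truncPow, if_pos ht, max_eq_left ht]
  · rw [truncPow, if_neg ht.not_ge, max_eq_right ht.le, zero_pow (h.resolve_right ht.not_ge)]

lemma truncPow_succ (k : ℕ) : truncPow (k + 1) = fun t => max t 0 ^ (k + 1) :=
  funext fun _ => truncPow_eq_max_pow (.inl k.succ_ne_zero)

lemma monotone_truncPow (k : ℕ) : Monotone (truncPow k) := by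
  intro x y hxy
  unfold truncPow
  split_ifs with hx hy hy
  · gcongr
  · exact absurd (hx.trans hxy) hy
  · positivity
  · rfl

lemma hasDerivWithinAt_truncPow_succ (k : ℕ) (x : ℝ) :
    HasDerivWithinAt (truncPow (k + 1)) ((k + 1) * truncPow k x) (Ioi x) x := by
  rcases le_or_gt 0 x with hx | hx
  · have hpow : HasDerivWithinAt (fun t : ℝ => t ^ (k + 1)) ((k + 1) * x ^ k) (Ioi x) x := by
      simpa using (hasDerivAt_pow (k + 1) x).hasDerivWithinAt
    rw [truncPow, if_pos hx]
    exact hpow.congr (fun t ht => if_pos (hx.trans (mem_Ioi.mp ht).le)) (if_pos hx)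
  · have hzero : truncPow (k + 1) =ᶠ[nhds x] fun _ => 0 := by
      filter_upwards [Iio_mem_nhds hx] with t ht using if_neg (mem_Iio.mp ht).not_ge
    rw [truncPow, if_neg hx.not_ge, mul_zero]
    exact ((hasDerivAt_const x 0).congr_of_eventuallyEq hzero).hasDerivWithinAt

lemma integral_truncPow (k : ℕ) (x y : ℝ) :
    ∫ t in x..y, truncPow k t = (truncPow (k + 1) y - truncPow (k + 1) x) / (k + 1) := by
  have hcont : Continuous (truncPow (k + 1)) := by rw [truncPow_succ]; fun_prop
  rw [eq_div_iff (by positivity), mul_comm, ← intervalIntegral.integral_const_mul]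
  exact intervalIntegral.integral_eq_sub_of_hasDeriv_right hcont.continuousOn
    (fun t _ => hasDerivWithinAt_truncPow_succ k t)
    ((monotone_truncPow k).intervalIntegrable.const_mul _)

lemma integral_fwdDiff_iter_truncPow (k : ℕ) (x h : ℝ) :
    ∫ t in x..x + h, (fwdDiff h)^[k] (truncPow k) t =
      (fwdDiff h)^[k + 1] (truncPow (k + 1)) x / (k + 1) := by
  have hwindow : (fun u => ∫ t in u..u + h, truncPow k t) =
      (k + 1 : ℝ)⁻¹ • fwdDiff h (truncPow (k + 1)) := by
    funext u
    rw [integral_truncPow, Pi.smul_apply, fwdDiff, smul_eq_mul, div_eq_inv_mul]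
  rw [integral_fwdDiff_iter fun _ _ => (monotone_truncPow k).intervalIntegrable, hwindow,
    fwdDiff_iter_const_smul, Pi.smul_apply, smul_eq_mul, Function.iterate_succ_apply,
    div_eq_inv_mul]

end TruncatedPower

section ProductMeasures

theorem measureReal_pi_eq_integral_insertNth {n : ℕ} {α : Fin (n + 1) → Type*}
    [∀ i, MeasurableSpace (α i)] (μ : ∀ i, Measure (α i)) [∀ i, IsFiniteMeasure (μ i)]
    (i : Fin (n + 1)) {A : Set (∀ j, α j)} (hA : MeasurableSet A) :
    (Measure.pi μ).real A =
      ∫ s, (Measure.pi fun j => μ (i.succAbove j)).real {w | i.insertNth s w ∈ A} ∂μ i := by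
  let e := MeasurableEquiv.piFinSuccAbove α i
  have he := (measurePreserving_piFinSuccAbove μ i).symm
  have hA' : MeasurableSet (e.symm ⁻¹' A) := e.symm.measurable hA
  rw [measureReal_def, ← he.measure_preimage hA.nullMeasurableSet, Measure.prod_apply hA',
    ← integral_toReal (measurable_measure_prodMk_left hA').aemeasurable
      (.of_forall fun _ => measure_lt_top _ _)]
  rfl

theorem measureReal_pi_subtype_prod {ι : Type*} [Fintype ι] {α : ι → Type*}
    [∀ i, MeasurableSpace (α i)] (μ : ∀ i, Measure (α i)) [∀ i, SigmaFinite (μ i)] (p : ι → Prop)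
    [DecidablePred p] (A : Set (∀ i : Subtype p, α i)) (B : Set (∀ i : { i // ¬p i }, α i)) :
    (Measure.pi μ).real {x | (fun i : Subtype p => x i) ∈ A ∧ (fun i : { i // ¬p i } => x i) ∈ B} =
      (Measure.pi fun i : Subtype p => μ i).real A *
        (Measure.pi fun i : { i // ¬p i } => μ i).real B := by
  rw [← measureReal_prod_prod]
  exact congrArg ENNReal.toReal
    ((measurePreserving_piEquivPiSubtypeProd μ p).measure_preimage_equiv (A ×ˢ B))

lemma pi_const_smul {ι : Type*} [Fintype ι] {α : ι → Type*} [∀ i, MeasurableSpace (α i)]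
    (μ : ∀ i, Measure (α i)) [∀ i, SigmaFinite (μ i)] {c : ℝ≥0∞} (hc : c ≠ ∞) :
    Measure.pi (fun i => c • μ i) = c ^ Fintype.card ι • Measure.pi μ := by
  lift c to NNReal using hc
  have hfin (i : ι) : SigmaFinite ((c : ℝ≥0∞) • μ i) := inferInstanceAs (SigmaFinite (c • μ i))
  refine Measure.pi_eq fun s _ => ?_
  simp only [Measure.smul_apply, Measure.pi_pi, smul_eq_mul, Finset.prod_mul_distrib,
    Finset.prod_const, Finset.card_univ]

end ProductMeasures

section Cube

/-- Lebesgue measure on the cube `[a, b] ^ ι`, as a measure on `ι → ℝ`. -/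
noncomputable abbrev cubeVolume (ι : Type*) [Fintype ι] (a b : ℝ) : Measure (ι → ℝ) :=
  Measure.pi fun _ => volume.restrict (Icc a b)

variable {ι : Type*} [Fintype ι] {a b s : ℝ}

lemma ae_cubeVolume_mem_Icc (a b : ℝ) : ∀ᵐ y ∂cubeVolume ι a b, ∀ i, y i ∈ Icc a b := by
  rw [cubeVolume, ← Measure.restrict_pi_pi]
  filter_upwards [ae_restrict_mem (.univ_pi fun _ => measurableSet_Icc)] with y hy i
  exact hy i (mem_univ i)

lemma cubeVolume_real_congr {κ : Type*} [Fintype κ] (e : ι ≃ κ) (a b : ℝ) (A : Set (κ → ℝ)) :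
    (cubeVolume κ a b).real A = (cubeVolume ι a b).real {y | y ∘ e.symm ∈ A} := by
  have he := measurePreserving_arrowCongr' (fun _ : ι => volume.restrict (Icc a b))
    (fun _ : κ => volume.restrict (Icc a b)) e (.refl ℝ) fun _ => .id _
  exact congrArg ENNReal.toReal (he.measure_preimage_equiv A).symm

lemma cubeVolume_real_le (hs : s ∈ Icc a b) :
    (cubeVolume ι a b).real {z | ∀ i, z i ≤ s} = (s - a) ^ Fintype.card ι := by
  have hset : {z : ι → ℝ | ∀ i, z i ≤ s} = univ.pi fun _ => Iic s := by
    ext z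
    simp only [mem_ofPred_eq, mem_univ_pi, mem_Iic]
  have hside : volume.restrict (Icc a b) (Iic s) = ENNReal.ofReal (s - a) := by
    rw [Measure.restrict_apply measurableSet_Iic, inter_comm, ← Ici_inter_Iic, inter_assoc,
      Iic_inter_Iic, inf_eq_right.mpr hs.2, Ici_inter_Iic, Real.volume_Icc]
  rw [hset, measureReal_def, Measure.pi_pi]
  simp [hside, sub_nonneg.mpr hs.1]

lemma cubeVolume_restrict_ge (hs : a ≤ s) :
    (cubeVolume ι a b).restrict {y | ∀ i, s ≤ y i} = cubeVolume ι s b := by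
  have hset : {y : ι → ℝ | ∀ i, s ≤ y i} = univ.pi fun _ => Ici s := by
    ext y
    simp only [mem_ofPred_eq, mem_univ_pi, mem_Ici]
  rw [hset, Measure.restrict_pi_pi]
  simp only [Measure.restrict_restrict measurableSet_Ici, ← Ici_inter_Iic, ← inter_assoc,
    Ici_inter_Ici, sup_eq_left.mpr hs, cubeVolume]

lemma cubeVolume_fin_real_sum_le_succ (hab : a ≤ b) (n : ℕ) (γ : ℝ) :
    (cubeVolume (Fin (n + 1)) a b).real {y | ∑ i, y i ≤ γ} =
      ∫ t in γ - b..γ - a, (cubeVolume (Fin n) a b).real {y | ∑ i, y i ≤ t} := by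
  have hmeas : MeasurableSet {y : Fin (n + 1) → ℝ | ∑ i, y i ≤ γ} :=
    measurableSet_le (by fun_prop) measurable_const
  rw [cubeVolume, measureReal_pi_eq_integral_insertNth _ 0 hmeas, integral_Icc_eq_integral_Ioc,
    ← intervalIntegral.integral_of_le hab, ← intervalIntegral.integral_comp_sub_left]
  simp [Fin.sum_univ_succ, le_sub_iff_add_le']

lemma cubeVolume_fin_real_sum_le (hab : a ≤ b) (n : ℕ) (γ : ℝ) :
    (cubeVolume (Fin n) a b).real {y | ∑ i, y i ≤ γ} =
      (fwdDiff (b - a))^[n] (truncPow n) (γ - n * b) / n.factorial := by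
  induction n generalizing γ with
  | zero =>
    by_cases hγ : 0 ≤ γ <;> simp [truncPow, hγ, measureReal_def]
  | succ n ih =>
    have hlower : γ - b - n * b = γ - (n + 1 : ℕ) * b := by push_cast; ring
    have hupper : γ - a - n * b = γ - (n + 1 : ℕ) * b + (b - a) := by push_cast; ring
    rw [cubeVolume_fin_real_sum_le_succ hab]
    simp_rw [ih]
    rw [intervalIntegral.integral_div, intervalIntegral.integral_comp_sub_right
      ((fwdDiff (b - a))^[n] (truncPow n)), hlower, hupper, integral_fwdDiff_iter_truncPow,
      div_div, Nat.factorial_succ, Nat.cast_mul, Nat.cast_succ]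

theorem cubeVolume_real_sum_le (hab : a ≤ b) (γ : ℝ) :
    (cubeVolume ι a b).real {y | ∑ i, y i ≤ γ} =
      (∑ j ∈ Finset.range (Fintype.card ι + 1), (-1 : ℝ) ^ j * ((Fintype.card ι).choose j : ℝ) *
        truncPow (Fintype.card ι) (γ - Fintype.card ι * a - j * (b - a))) /
        (Fintype.card ι).factorial := by
  have hbase : γ - Fintype.card ι * b = γ - Fintype.card ι * a - Fintype.card ι • (b - a) := by
    rw [nsmul_eq_mul]; ring
  rw [cubeVolume_real_congr (Fintype.equivFin ι).symm]
  simp only [mem_ofPred_eq, Equiv.symm_symm, Function.comp_apply,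
    Equiv.sum_comp (Fintype.equivFin ι)]
  rw [cubeVolume_fin_real_sum_le hab, hbase, fwdDiff_iter_sub_nsmul]
  simp

end Cube

section CappedExcess

/-- For `s < b`, the number `τ` in `[0, k]` for which `k * s + τ * (b - s)` is `γ` clipped to
`[k * s, k * b]`, the range of a sum of `k` coordinates lying in `[s, b]`. -/
noncomputable def cappedQuotient (k : ℕ) (b γ s : ℝ) : ℝ :=
  max (min ((γ - k * s) / (b - s)) k) 0

/-- The function `g_j` of the theorem: the amount by which `cappedQuotient` exceeds `j`, or `0`. -/
noncomputable def cappedExcess (k : ℕ) (b γ : ℝ) (j : ℕ) (s : ℝ) : ℝ :=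
  max (cappedQuotient k b γ s - j) 0

variable {ι : Type*} [Fintype ι] {a b s : ℝ}

lemma cappedQuotient_nonneg (k : ℕ) (b γ s : ℝ) : 0 ≤ cappedQuotient k b γ s :=
  le_max_right _ _

lemma cappedExcess_nonneg (k : ℕ) (b γ : ℝ) (j : ℕ) (s : ℝ) : 0 ≤ cappedExcess k b γ j s :=
  le_max_right _ _

lemma cappedExcess_le (k : ℕ) (b γ : ℝ) (j : ℕ) (s : ℝ) : cappedExcess k b γ j s ≤ k := by
  have hquot : cappedQuotient k b γ s ≤ k := max_le (min_le_right _ _) k.cast_nonneg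
  exact max_le ((sub_le_self _ j.cast_nonneg).trans hquot) k.cast_nonneg

lemma measurable_cappedExcess (k : ℕ) (b γ : ℝ) (j : ℕ) : Measurable (cappedExcess k b γ j) := by
  unfold cappedExcess cappedQuotient
  fun_prop

lemma integrableOn_cappedExcess_pow_mul (k m : ℕ) (a b γ : ℝ) (j : ℕ) :
    IntegrableOn (fun s => cappedExcess k b γ j s ^ k * (s - a) ^ m * (b - s) ^ k) (Icc a b) := by
  have hmeas := measurable_cappedExcess k b γ j
  refine Measure.integrableOn_of_bounded (M := (k : ℝ) ^ k * (b - a) ^ m * (b - a) ^ k) (by simp)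
    (by fun_prop) ?_
  filter_upwards [ae_restrict_mem measurableSet_Icc] with s ⟨has, hsb⟩
  have hg := cappedExcess_nonneg k b γ j s
  rw [Real.norm_of_nonneg (by positivity)]
  have hab : a ≤ b := has.trans hsb
  gcongr
  exact cappedExcess_le k b γ j s

lemma truncPow_cappedQuotient {k j : ℕ} (hj : j ≤ k) (γ : ℝ) (hsb : s < b) :
    truncPow k ((cappedQuotient k b γ s - j) * (b - s)) =
      cappedExcess k b γ j s ^ k * (b - s) ^ k := by
  have hbs : 0 ≤ b - s := (sub_pos.mpr hsb).le
  have hsign : k ≠ 0 ∨ 0 ≤ (cappedQuotient k b γ s - j) * (b - s) := by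
    rcases Nat.eq_zero_or_pos k with rfl | hk
    · obtain rfl := Nat.le_zero.mp hj
      right
      simpa using mul_nonneg (cappedQuotient_nonneg 0 b γ s) hbs
    · exact .inl hk.ne'
  rw [truncPow_eq_max_pow hsign, ← mul_pow, cappedExcess, max_mul_of_nonneg _ _ hbs, zero_mul]

lemma cubeVolume_real_sum_le_cappedQuotient (γ : ℝ) (hsb : s < b) :
    (cubeVolume ι s b).real {y | ∑ i, y i ≤ γ} ≤
      (cubeVolume ι s b).real
        {y | ∑ i, y i ≤ Fintype.card ι * s + cappedQuotient (Fintype.card ι) b γ s * (b - s)} := by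
  have hbs : 0 < b - s := sub_pos.mpr hsb
  refine ENNReal.toReal_mono (measure_ne_top _ _) (measure_mono_ae ?_)
  filter_upwards [ae_cubeVolume_mem_Icc s b] with y hy (hyγ : ∑ i, y i ≤ γ)
  have hsum : ∑ i, y i ≤ Fintype.card ι * b := by
    simpa using Finset.sum_le_card_nsmul Finset.univ y b fun i _ => (hy i).2
  have hquot : (∑ i, y i - Fintype.card ι * s) / (b - s) ≤
      cappedQuotient (Fintype.card ι) b γ s := by
    refine le_max_of_le_left (le_min (by gcongr) ?_)
    rw [div_le_iff₀ hbs]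
    linarith
  rw [div_le_iff₀ hbs] at hquot
  exact (by linarith :
    ∑ i, y i ≤ Fintype.card ι * s + cappedQuotient (Fintype.card ι) b γ s * (b - s))

theorem cubeVolume_real_sum_le_cappedExcess (γ : ℝ) (hsb : s < b) :
    (cubeVolume ι s b).real {y | ∑ i, y i ≤ γ} ≤
      (∑ j ∈ Finset.range (Fintype.card ι + 1), (-1 : ℝ) ^ j * ((Fintype.card ι).choose j : ℝ) *
        (cappedExcess (Fintype.card ι) b γ j s ^ Fintype.card ι * (b - s) ^ Fintype.card ι)) /
        (Fintype.card ι).factorial := by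
  refine (cubeVolume_real_sum_le_cappedQuotient γ hsb).trans_eq ?_
  rw [cubeVolume_real_sum_le hsb.le]
  congr 1
  refine Finset.sum_congr rfl fun j hj => ?_
  rw [← truncPow_cappedQuotient (Finset.mem_range_succ_iff.mp hj) γ hsb]
  congr 2
  ring

end CappedExcess

section PivotCell

/-- The cell of vectors whose coordinate `i` separates a set of larger coordinates from the
remaining, smaller ones, with the larger ones summing to at most `γ`. The larger coordinates are
listed by their positions `T` among the coordinates other than `i`. -/
def pivotCell {n : ℕ} (γ : ℝ) (i : Fin (n + 1)) (T : Finset (Fin n)) : Set (Fin (n + 1) → ℝ) :=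
  {x | (∀ j ∈ T, x i ≤ x (i.succAbove j)) ∧ (∀ j ∉ T, x (i.succAbove j) ≤ x i) ∧
    ∑ j ∈ T, x (i.succAbove j) ≤ γ}

lemma measurableSet_pivotCell {n : ℕ} (γ : ℝ) (i : Fin (n + 1)) (T : Finset (Fin n)) :
    MeasurableSet (pivotCell γ i T) := by
  simp only [pivotCell, ofPred_and, ofPred_forall]
  have hle (j l : Fin (n + 1)) : MeasurableSet {x : Fin (n + 1) → ℝ | x j ≤ x l} :=
    measurableSet_le (by fun_prop) (by fun_prop)
  exact (Finset.measurableSet_biInter _ fun _ _ => hle _ _).inter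
    ((MeasurableSet.iInter fun _ => .iInter fun _ => hle _ _).inter
      (measurableSet_le (by fun_prop) measurable_const))

lemma sumKLargest_eq_sum_of_antitone {N : ℕ} {x : Fin N → ℝ} {σ : Equiv.Perm (Fin N)}
    (hσ : Antitone (x ∘ σ)) (k : ℕ) :
    sumKLargest N k x = ∑ l with l.val < k, x (σ l) := by
  have hsort : (List.ofFn x).insertionSort (· ≥ ·) = List.ofFn (x ∘ σ) :=
    ((List.perm_insertionSort _ _).trans (σ.ofFn_comp_perm x).symm).eq_of_sortedGE
      List.sortedGE_insertionSort hσ.sortedGE_ofFn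
  rw [sumKLargest, hsort, List.sum_take_ofFn]
  rfl

lemma exists_perm_antitone_comp {N : ℕ} {α : Type*} [LinearOrder α] (x : Fin N → α) :
    ∃ σ : Equiv.Perm (Fin N), Antitone (x ∘ σ) :=
  ⟨Tuple.sort (OrderDual.toDual ∘ x), Tuple.monotone_sort (OrderDual.toDual ∘ x)⟩

lemma sum_succAbove_filter_symm_lt {M : Type*} [AddCommMonoid M] {n : ℕ}
    (σ : Equiv.Perm (Fin (n + 1))) (p : Fin (n + 1)) (f : Fin (n + 1) → M) :
    ∑ j with σ.symm ((σ p).succAbove j) < p, f ((σ p).succAbove j) = ∑ l with l < p, f (σ l) := by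
  calc ∑ j with σ.symm ((σ p).succAbove j) < p, f ((σ p).succAbove j)
      = ∑ i with σ.symm i < p, f i := by
        rw [Finset.sum_filter, Finset.sum_filter, Fin.sum_univ_succAbove _ (σ p)]
        simp
    _ = ∑ l with l < p, f (σ l) := by
        rw [Finset.sum_filter, Finset.sum_filter, ← Equiv.sum_comp σ]
        simp

theorem exists_mem_pivotCell {n k : ℕ} (hk : k ≤ n) {γ : ℝ} {x : Fin (n + 1) → ℝ}
    (hx : sumKLargest (n + 1) k x ≤ γ) :
    ∃ (i : Fin (n + 1)) (T : Finset (Fin n)), T.card = k ∧ x ∈ pivotCell γ i T := by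
  obtain ⟨σ, hσ⟩ := exists_perm_antitone_comp x
  let p : Fin (n + 1) := ⟨k, Nat.lt_succ_of_le hk⟩
  let T : Finset (Fin n) := {j | σ.symm ((σ p).succAbove j) < p}
  have hmem (j : Fin n) : j ∈ T ↔ σ.symm ((σ p).succAbove j) < p := Finset.mem_filter_univ _
  have hval (l : Fin (n + 1)) : (x ∘ σ) (σ.symm l) = x l := congrArg x (σ.apply_symm_apply l)
  refine ⟨σ p, T, ?_, fun j hj => ?_, fun j hj => ?_, ?_⟩
  · rw [Finset.card_eq_sum_ones, sum_succAbove_filter_symm_lt σ p fun _ => 1,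
      ← Finset.card_eq_sum_ones, Finset.filter_gt_eq_Iio, Fin.card_Iio]
  · exact (hσ ((hmem j).mp hj).le).trans_eq (hval _)
  · exact (hval _).symm.trans_le (hσ (not_lt.mp (mt (hmem j).mpr hj)))
  · rw [sum_succAbove_filter_symm_lt]
    exact (sumKLargest_eq_sum_of_antitone hσ k).symm.trans_le hx

variable {a b s : ℝ}

lemma cubeVolume_real_slice {ι : Type*} [Fintype ι] (T : Finset ι) (hs : s ∈ Icc a b) (γ : ℝ) :
    (cubeVolume ι a b).real
        {w | (∀ j ∈ T, s ≤ w j) ∧ (∀ j ∉ T, w j ≤ s) ∧ ∑ j ∈ T, w j ≤ γ} =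
      (cubeVolume T s b).real {y | ∑ j, y j ≤ γ} * (s - a) ^ (Fintype.card ι - T.card) := by
  have hhigh : (cubeVolume T a b).real ({y | ∑ j, y j ≤ γ} ∩ {y | ∀ j, s ≤ y j}) =
      (cubeVolume T s b).real {y | ∑ j, y j ≤ γ} := by
    rw [← cubeVolume_restrict_ge hs.1, measureReal_restrict_apply]
    exact measurableSet_le (by fun_prop) measurable_const
  have hlow := cubeVolume_real_le (ι := {j // j ∉ T}) hs
  rw [Fintype.card_subtype_compl, Fintype.card_coe] at hlow
  have hset : {w : ι → ℝ | (∀ j ∈ T, s ≤ w j) ∧ (∀ j ∉ T, w j ≤ s) ∧ ∑ j ∈ T, w j ≤ γ} =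
      {w | (fun j : T => w j) ∈ {y : T → ℝ | ∑ j, y j ≤ γ} ∩ {y | ∀ j, s ≤ y j} ∧
        (fun j : {j // j ∉ T} => w j) ∈ {z : {j // j ∉ T} → ℝ | ∀ j, z j ≤ s}} := by
    ext w
    simp only [mem_ofPred_eq, mem_inter_iff, Subtype.forall, Finset.sum_coe_sort T w]
    tauto
  rw [hset, ← hhigh, ← hlow]
  convert measureReal_pi_subtype_prod (fun _ : ι => volume.restrict (Icc a b)) (· ∈ T) _ _

theorem cubeVolume_real_pivotCell {n : ℕ} (a b γ : ℝ) (i : Fin (n + 1)) (T : Finset (Fin n)) :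
    (cubeVolume (Fin (n + 1)) a b).real (pivotCell γ i T) =
      ∫ s in Icc a b, (cubeVolume T s b).real {y | ∑ j, y j ≤ γ} * (s - a) ^ (n - T.card) := by
  rw [cubeVolume, measureReal_pi_eq_integral_insertNth _ i (measurableSet_pivotCell γ i T)]
  refine setIntegral_congr_fun measurableSet_Icc fun s hs => ?_
  simp only [pivotCell, mem_ofPred_eq, Fin.insertNth_apply_same, Fin.insertNth_apply_succAbove]
  simpa using cubeVolume_real_slice T hs γ

theorem cubeVolume_real_pivotCell_le {n : ℕ} (a b γ : ℝ) (i : Fin (n + 1)) (T : Finset (Fin n)) :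
    (cubeVolume (Fin (n + 1)) a b).real (pivotCell γ i T) ≤
      (∑ j ∈ Finset.range (T.card + 1), (-1 : ℝ) ^ j * (T.card.choose j : ℝ) *
        ∫ s in Icc a b, cappedExcess T.card b γ j s ^ T.card * (s - a) ^ (n - T.card) *
          (b - s) ^ T.card) / T.card.factorial := by
  have hint (j : ℕ) := (integrableOn_cappedExcess_pow_mul T.card (n - T.card) a b γ j).const_mul
    ((-1 : ℝ) ^ j * (T.card.choose j : ℝ))
  have hlt : ∀ᵐ s ∂volume.restrict (Icc a b), s < b := by
    filter_upwards [ae_restrict_mem measurableSet_Icc, ae_restrict_of_ae (Measure.ae_ne volume b)]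
      with s hs hsb using hs.2.lt_of_ne hsb
  simp_rw [cubeVolume_real_pivotCell, ← integral_const_mul]
  rw [← integral_finsetSum _ fun j _ => hint j, ← integral_div]
  refine integral_mono_of_nonneg ?_ ((integrable_finsetSum _ fun j _ => hint j).div_const _) ?_
  · filter_upwards [ae_restrict_mem measurableSet_Icc] with s hs
    exact mul_nonneg measureReal_nonneg (pow_nonneg (sub_nonneg.mpr hs.1) _)
  · filter_upwards [ae_restrict_mem measurableSet_Icc, hlt] with s hs hsb
    have hsa : 0 ≤ (s - a) ^ (n - T.card) := pow_nonneg (sub_nonneg.mpr hs.1) _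
    refine (mul_le_mul_of_nonneg_right (cubeVolume_real_sum_le_cappedExcess γ hsb) hsa).trans_eq ?_
    rw [div_mul_eq_mul_div, Finset.sum_mul, Fintype.card_coe]
    congr 1
    exact Finset.sum_congr rfl fun j _ => by ring

theorem cubeVolume_real_sumKLargest_le {n k : ℕ} (hk : k ≤ n) (a b γ : ℝ) :
    (cubeVolume (Fin (n + 1)) a b).real {x | sumKLargest (n + 1) k x ≤ γ} ≤
      (n + 1) * n.choose k * ((∑ j ∈ Finset.range (k + 1), (-1 : ℝ) ^ j * (k.choose j : ℝ) *
        ∫ s in Icc a b, cappedExcess k b γ j s ^ k * (s - a) ^ (n - k) * (b - s) ^ k) /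
          k.factorial) := by
  let cells : Finset (Fin (n + 1) × Finset (Fin n)) :=
    Finset.univ ×ˢ Finset.powersetCard k Finset.univ
  have hcover : {x | sumKLargest (n + 1) k x ≤ γ} ⊆ ⋃ c ∈ cells, pivotCell γ c.1 c.2 := by
    intro x hx
    obtain ⟨i, T, hT, hxT⟩ := exists_mem_pivotCell hk hx
    exact mem_biUnion (x := (i, T)) (by simp [cells, hT]) hxT
  have hcard : (cells.card : ℝ) = (n + 1) * n.choose k := by simp [cells]
  rw [← hcard, ← nsmul_eq_mul]
  calc (cubeVolume (Fin (n + 1)) a b).real {x | sumKLargest (n + 1) k x ≤ γ}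
      ≤ ∑ c ∈ cells, (cubeVolume (Fin (n + 1)) a b).real (pivotCell γ c.1 c.2) :=
        (measureReal_mono hcover (measure_ne_top _ _)).trans (measureReal_biUnion_finset_le _ _)
    _ ≤ _ := Finset.sum_le_card_nsmul _ _ _ fun c hc => by
        obtain rfl : c.2.card = k := by simpa [cells] using hc
        exact cubeVolume_real_pivotCell_le a b γ c.1 c.2

end PivotCell

lemma pi_unif_real {ι : Type*} [Fintype ι] {a b : ℝ} (hab : a < b) (A : Set (ι → ℝ)) :
    (Measure.pi fun _ : ι => unif a b).real A =
      (1 / (b - a)) ^ Fintype.card ι * (cubeVolume ι a b).real A := by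
  have hvol : volume (Icc a b) ≠ 0 := by simpa using hab
  unfold unif
  rw [pi_const_smul _ (ENNReal.inv_ne_top.mpr hvol), measureReal_ennreal_smul_apply]
  simp [hab.le]

theorem stmt_15_general (N k : ℕ) (hk : k < N) (a b γ : ℝ) (hab : a < b)
    (g : ℕ → ℝ → ℝ)
    (hg : ∀ j s, g j s = max (max (min ((γ - k * s) / (b - s)) (k : ℝ)) 0 - j) 0) :
    (Measure.pi fun _ : Fin N => unif a b).real {x | sumKLargest N k x ≤ γ} ≤
      (N.factorial : ℝ) / (((N - k - 1).factorial : ℝ) * ((k.factorial : ℝ)) ^ 2) *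
        (1 / (b - a)) ^ N *
        ∑ j ∈ Finset.range (k + 1), (-1 : ℝ) ^ j * (k.choose j : ℝ) *
          ∫ s in Set.Icc a b, (g j s) ^ k * (s - a) ^ (N - k - 1) * (b - s) ^ k := by
  obtain ⟨n, rfl⟩ : ∃ n, N = n + 1 := Nat.exists_eq_add_one_of_ne_zero hk.ne_bot
  obtain rfl : g = cappedExcess k b γ := funext₂ hg
  have hkn : k ≤ n := Nat.le_of_lt_succ hk
  have hcoeff : (n + 1) * n.choose k / k.factorial =
      ((n + 1).factorial : ℝ) / ((n - k).factorial * (k.factorial : ℝ) ^ 2) := by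
    rw [Nat.cast_choose ℝ hkn, Nat.factorial_succ]
    push_cast
    field_simp
  have hb : 0 ≤ 1 / (b - a) := one_div_nonneg.mpr (sub_nonneg.mpr hab.le)
  rw [pi_unif_real hab, Fintype.card_fin, show n + 1 - k - 1 = n - k by omega, ← hcoeff]
  refine (mul_le_mul_of_nonneg_left (cubeVolume_real_sumKLargest_le hkn a b γ)
    (pow_nonneg hb _)).trans_eq ?_
  ring

/-- Upper bound on `P(M_k ≤ γ)` for the ordered scheme:
`P(M_k ≤ γ) ≤ [N!/((N-k-1)!(k!)²)] (1/(b-a))^N ∑_{j=0}^{k} (-1)^j C(k,j)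
  ∫_a^b g_j(s)^k (s-a)^(N-k-1) (b-s)^k ds`,
where `g_j(s) = (max(min((γ - ks)/(b - s), k), 0) - j)₊`. -/
theorem stmt_15 (N k : ℕ) (hN : 1 ≤ N) (hk : k ≤ N - 1)
    (a b γ : ℝ) (ha : 0 ≤ a) (hab : a < b)
    (P : Measure (Fin N → ℝ)) (hP : P = Measure.pi fun _ => unif a b)
    (g : ℕ → ℝ → ℝ)
    (hg : ∀ j s, g j s = max (max (min ((γ - k * s) / (b - s)) (k : ℝ)) 0 - j) 0) :
    (P {x | sumKLargest N k x ≤ γ}).toReal ≤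
      (N.factorial : ℝ) / (((N - k - 1).factorial : ℝ) * ((k.factorial : ℝ)) ^ 2) *
        (1 / (b - a)) ^ N *
        ∑ j ∈ Finset.range (k + 1), (-1 : ℝ) ^ j * (k.choose j : ℝ) *
          ∫ s in Set.Icc a b, (g j s) ^ k * (s - a) ^ (N - k - 1) * (b - s) ^ k := by
  subst hP
  exact stmt_15_general N k (by omega) a b γ hab g hg
end

section
/- Let N ≥ 1, let 0 ≤ a < b, let γ > 0, and let P be the product of N copies of the uniform probability measure on [a,b]. Let M_k(x) be the sum of the k largest coordinates of x ∈ [a,b]^N (M_0 = 0), and define the ordered stopping index k* as the least k ∈ {1,…,N} with M_k ≥ γ, with k* = N if no such k exists. For 0 ≤ k ≤ N−1 and 0 ≤ j ≤ k define g_{k,j}(s) = max( max(min((γ − ks)/(b − s), k), 0) − j, 0 ) for s ∈ [a,b). Then the expected number of transmissions satisfies the upper bound E[k*] ≤ Σ_{k=0}^{N-1} [N! / ((N−k−1)! (k!)²)] (1/(b−a))^N Σ_{j=0}^{k} (−1)^j C(k,j) ∫_a^b g_{k,j}(s)^k (s − a)^{N−k−1} (b − s)^k ds (the upper bound of Theorem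 1, in integral form). -/
open MeasureTheory
open scoped Classical

/-!
By the tail-sum formula `E[k*] ≤ ∑_{k<N} P(k < k*)`, and for `k ≥ 1` the event `k < k*` forces
`M_k < γ`.  Almost surely exactly one coordinate `s` separates the `k` largest coordinates from the
`N - k - 1` smallest; choosing it and the set of coordinates above it gives `N * C(N-1, k)` cells,
of equal measure by symmetry, which cover the cube.  Given `s`, the lower coordinates contribute
`((s - a) / (b - a)) ^ (N - k - 1)`.  The upper ones, rescaled from `[s, b]` to `[0, 1]`, fill the
slice of the unit cube on which the coordinates sum to at most `(γ - ks) / (b - s)`, whose volume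
is the Irwin–Hall distribution function; expanding the latter yields the alternating sum.
-/

section StoppingIndex

/-- The first index `k ∈ {1, …, N}` at which the sequence `M` reaches the level `γ`, and `N` if
there is none: the stopping index `k*` of the scheme along a sample with partial sums `M`. -/
noncomputable def firstPassage (M : ℕ → ℝ) (N : ℕ) (γ : ℝ) : ℕ :=
  if ∃ k, (1 ≤ k ∧ k ≤ N) ∧ γ ≤ M k then sInf {k | (1 ≤ k ∧ k ≤ N) ∧ γ ≤ M k} else N

variable {M : ℕ → ℝ} {N k : ℕ} {γ : ℝ}

lemma firstPassage_le : firstPassage M N γ ≤ N := by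
  unfold firstPassage
  split_ifs with hex
  · exact (Nat.sInf_mem hex).1.2
  · exact le_rfl

lemma lt_of_lt_firstPassage (hk : 1 ≤ k) (hlt : k < firstPassage M N γ) : M k < γ := by
  by_contra! hM
  have hmem : (1 ≤ k ∧ k ≤ N) ∧ γ ≤ M k := ⟨⟨hk, hlt.le.trans firstPassage_le⟩, hM⟩
  rw [firstPassage, if_pos ⟨k, hmem⟩] at hlt
  exact hlt.not_ge (Nat.sInf_le hmem)

end StoppingIndex

section TailSum

lemma integral_natCast_le_sum_measureReal_lt {Ω : Type*} [MeasurableSpace Ω] (μ : Measure Ω)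
    [IsFiniteMeasure μ] {X : Ω → ℕ} {N : ℕ} (hX : ∀ ω, X ω ≤ N) :
    ∫ ω, (X ω : ℝ) ∂μ ≤ ∑ k ∈ Finset.range N, μ.real {ω | k < X ω} := by
  set A : ℕ → Set Ω := fun k => toMeasurable μ {ω | k < X ω}
  have hA : ∀ k, MeasurableSet (A k) := fun k => measurableSet_toMeasurable _ _
  have hint : ∀ k ∈ Finset.range N, Integrable ((A k).indicator (1 : Ω → ℝ)) μ :=
    fun k _ => (integrable_const 1).indicator (hA k)
  have hXA : ∀ ω, (X ω : ℝ) ≤ ∑ k ∈ Finset.range N, (A k).indicator (1 : Ω → ℝ) ω := fun ω =>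
    calc (X ω : ℝ) = ∑ _ ∈ Finset.range (X ω), (1 : ℝ) := by simp
      _ ≤ ∑ k ∈ Finset.range (X ω), (A k).indicator (1 : Ω → ℝ) ω :=
        Finset.sum_le_sum fun k hk => by
          rw [Set.indicator_of_mem (subset_toMeasurable μ _ (Finset.mem_range.mp hk)), Pi.one_apply]
      _ ≤ ∑ k ∈ Finset.range N, (A k).indicator (1 : Ω → ℝ) ω :=
        Finset.sum_le_sum_of_subset_of_nonneg (Finset.range_mono (hX ω))
          fun k _ _ => Set.indicator_nonneg (fun _ _ => zero_le_one) ω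
  calc ∫ ω, (X ω : ℝ) ∂μ ≤ ∫ ω, ∑ k ∈ Finset.range N, (A k).indicator (1 : Ω → ℝ) ω ∂μ :=
        integral_mono_of_nonneg (.of_forall fun ω => Nat.cast_nonneg (X ω))
          (integrable_finsetSum _ hint) (.of_forall hXA)
    _ = ∑ k ∈ Finset.range N, μ.real (A k) := by
        rw [integral_finsetSum _ hint]
        exact Finset.sum_congr rfl fun k _ => integral_indicator_one (hA k)
    _ = ∑ k ∈ Finset.range N, μ.real {ω | k < X ω} := by
        simp only [A, Measure.real, measure_toMeasurable]

lemma measureReal_prod_eq_integral {X Y : Type*} [MeasurableSpace X] [MeasurableSpace Y]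
    (μ : Measure X) (ρ : Measure Y) [SFinite ρ] {A : Set (X × Y)} (hA : MeasurableSet A)
    (hfin : ∀ᵐ x ∂μ, ρ (Prod.mk x ⁻¹' A) < ⊤) :
    (μ.prod ρ).real A = ∫ x, ρ.real (Prod.mk x ⁻¹' A) ∂μ := by
  rw [Measure.real, Measure.prod_apply hA]
  exact (integral_toReal (measurable_measure_prodMk_left hA).aemeasurable hfin).symm

end TailSum

section SplitCoordinates

variable {ι X α β : Type*}

/-- The vector indexed by `ι ≃ {none} ⊔ α ⊔ β` with prescribed distinguished coordinate, `α`-block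
and `β`-block. -/
def assemble (e : Option (α ⊕ β) ≃ ι) (p : X × (α → X) × (β → X)) : ι → X :=
  fun i => (e.symm i).elim p.1 (Sum.elim p.2.1 p.2.2)

lemma measurePreserving_assemble [Fintype ι] [Fintype α] [Fintype β] [MeasurableSpace X]
    (ν : Measure X) [SigmaFinite ν] (e : Option (α ⊕ β) ≃ ι) :
    MeasurePreserving (assemble e)
      (ν.prod ((Measure.pi fun _ : α => ν).prod (Measure.pi fun _ : β => ν)))
      (Measure.pi fun _ : ι => ν) := by
  have hmeas : Measurable (assemble (X := X) e) := by
    refine measurable_pi_iff.mpr fun i => ?_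
    unfold assemble
    rcases e.symm i with _ | j | j <;>
      simp only [Option.elim_none, Option.elim_some, Sum.elim_inl, Sum.elim_inr] <;> fun_prop
  refine ⟨hmeas, (Measure.pi_eq fun s hs => ?_).symm⟩
  have hbox : assemble e ⁻¹' Set.univ.pi s = s (e none) ×ˢ
      (Set.univ.pi (fun j => s (e (some (.inl j)))) ×ˢ
        Set.univ.pi fun j => s (e (some (.inr j)))) := by
    ext p
    simp only [Set.mem_preimage, Set.mem_univ_pi, Set.mem_prod, ← e.forall_congr_right, assemble,
      e.symm_apply_apply, Option.forall, Sum.forall, Option.elim_none, Option.elim_some,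
      Sum.elim_inl, Sum.elim_inr]
  rw [Measure.map_apply hmeas (MeasurableSet.univ_pi hs), hbox, Measure.prod_prod,
    Measure.prod_prod, Measure.pi_pi, Measure.pi_pi, ← e.prod_comp, Fintype.prod_option,
    Fintype.prod_sum_type]

lemma exists_equiv_option_sum_of_notMem [Fintype ι] {i : ι} {S : Finset ι} (hi : i ∉ S) :
    ∃ e : Option (Fin S.card ⊕ Fin (Fintype.card ι - S.card - 1)) ≃ ι,
      e none = i ∧ ∀ j, e (some j) ∈ S ↔ j.isLeft := by
  have hcard : (insert i S).card + (insert i S)ᶜ.card = Fintype.card ι :=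
    Finset.card_add_card_compl _
  rw [Finset.card_insert_of_notMem hi] at hcard
  let eS := S.equivFin
  let eR := (insert i S)ᶜ.equivFinOfCardEq (n := Fintype.card ι - S.card - 1) (by omega)
  let f : Option (Fin S.card ⊕ Fin (Fintype.card ι - S.card - 1)) → ι :=
    fun o => o.elim i (Sum.elim (fun j => eS.symm j) (fun j => eR.symm j))
  have hsurj : Function.Surjective f := fun j => by
    by_cases hji : j = i
    · exact ⟨none, hji.symm⟩
    by_cases hjS : j ∈ S
    · exact ⟨some (.inl (eS ⟨j, hjS⟩)), by simp [f]⟩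
    · exact ⟨some (.inr (eR ⟨j, by simp [hji, hjS]⟩)), by simp [f]⟩
  have hbij : f.Bijective := (Fintype.bijective_iff_surjective_and_card f).mpr ⟨hsurj, by
    simp only [Fintype.card_option, Fintype.card_sum, Fintype.card_fin]; omega⟩
  refine ⟨Equiv.ofBijective f hbij, rfl, ?_⟩
  rintro (j | j)
  · simp [f]
  · have hj := Finset.mem_compl.mp (eR.symm j).2
    simpa [f] using fun h => hj (Finset.mem_insert_of_mem h)

end SplitCoordinates

section LargestCoordinates

variable {ι : Type*} {N k : ℕ}

/-- The configurations in which `x i` separates the coordinates in `S`, which lie above it, from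
the remaining ones, which lie below it, and the coordinates in `S` sum to at most `T`.  For
`#S = k` this says that the sum of the `k` largest coordinates is at most `T`. -/
def orderCell (i : ι) (S : Finset ι) (T : ℝ) : Set (ι → ℝ) :=
  {x | (∀ j ∈ S, x i ≤ x j) ∧ (∀ j ∉ S, x j ≤ x i) ∧ ∑ j ∈ S, x j ≤ T}

/-- The vectors with all coordinates at least `s` and coordinate sum at most `T`. -/
def upperSlice (k : ℕ) (s T : ℝ) : Set (Fin k → ℝ) := {y | (∀ j, s ≤ y j) ∧ ∑ j, y j ≤ T}

lemma measurableSet_upperSlice {k : ℕ} {s T : ℝ} : MeasurableSet (upperSlice k s T) := by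
  unfold upperSlice
  measurability

lemma measurableSet_orderCell [Countable ι] (i : ι) (S : Finset ι) (T : ℝ) :
    MeasurableSet (orderCell i S T) := by
  unfold orderCell
  measurability

lemma assemble_mem_orderCell_iff {m : ℕ} {e : Option (Fin k ⊕ Fin m) ≃ ι} {S : Finset ι}
    (hS : ∀ j, e (some j) ∈ S ↔ j.isLeft) (hi : e none ∉ S) {T s : ℝ} {y : Fin k → ℝ}
    {z : Fin m → ℝ} :
    assemble e (s, y, z) ∈ orderCell (e none) S T ↔ y ∈ upperSlice k s T ∧ ∀ j, z j ≤ s := by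
  have hsum : ∑ j ∈ S, assemble e (s, y, z) j = ∑ j, y j := by
    have := Fintype.ofEquiv _ e
    rw [← Finset.univ_inter S, ← Finset.sum_ite_mem, ← e.sum_comp]
    simp [Fintype.sum_option, assemble, hS, hi]
  simp only [orderCell, upperSlice, Set.mem_ofPred_eq, hsum, ← e.forall_congr_right,
    Option.forall, Sum.forall, hS, hi]
  simp [assemble, and_assoc, and_comm, and_left_comm]

lemma measureReal_orderCell [Fintype ι] (ν : Measure ℝ) [IsFiniteMeasure ν] {i : ι} {S : Finset ι}
    (hi : i ∉ S) (T : ℝ) :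
    (Measure.pi fun _ : ι => ν).real (orderCell i S T) =
      ∫ s, (Measure.pi fun _ : Fin S.card => ν).real (upperSlice S.card s T) *
        ν.real (Set.Iic s) ^ (Fintype.card ι - S.card - 1) ∂ν := by
  obtain ⟨e, rfl, hS⟩ := exists_equiv_option_sum_of_notMem hi
  have he := measurePreserving_assemble ν e
  have hcell := measurableSet_orderCell (e none) S T
  rw [← he.measureReal_preimage hcell.nullMeasurableSet,
    measureReal_prod_eq_integral _ _ (he.measurable hcell) (.of_forall fun _ => measure_lt_top _ _)]
  congr 1 with s
  have hprod : Prod.mk s ⁻¹' (assemble e ⁻¹' orderCell (e none) S T) =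
      upperSlice S.card s T ×ˢ Set.univ.pi fun _ => Set.Iic s := by
    ext ⟨y, z⟩
    simp only [Set.mem_preimage, assemble_mem_orderCell_iff hS hi, Set.mem_prod, Set.mem_univ_pi,
      Set.mem_Iic]
  rw [hprod, measureReal_prod_prod]
  simp only [Measure.real, Measure.pi_pi, Finset.prod_const, Finset.card_univ, Fintype.card_fin,
    ENNReal.toReal_pow]

lemma exists_mem_orderCell_sumKLargest (hk : k < N) (x : Fin N → ℝ) :
    ∃ i, ∃ S ∈ (Finset.univ.erase i).powersetCard k, x ∈ orderCell i S (sumKLargest N k x) := by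
  set τ : Equiv.Perm (Fin N) := Fin.revPerm.trans (Tuple.sort x)
  have hanti : Antitone (x ∘ τ) := (Tuple.monotone_sort x).comp_antitone Fin.rev_anti
  have hsort : (List.ofFn x).insertionSort (· ≥ ·) = List.ofFn (x ∘ τ) :=
    ((List.perm_insertionSort _ _).trans (Equiv.Perm.ofFn_comp_perm τ x).symm).eq_of_sortedGE
      List.sortedGE_insertionSort hanti.sortedGE_ofFn
  have hmem : ∀ p, τ p ∈ (Finset.Iio ⟨k, hk⟩).map τ.toEmbedding ↔ p < ⟨k, hk⟩ := by simp
  refine ⟨τ ⟨k, hk⟩, (Finset.Iio ⟨k, hk⟩).map τ.toEmbedding, ?_, ?_, ?_, ?_⟩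
  · rw [Finset.mem_powersetCard, Finset.subset_erase, hmem]
    simp
  · exact τ.forall_congr_right.mp fun p hp => hanti ((hmem p).mp hp).le
  · exact τ.forall_congr_right.mp fun p hp => hanti (not_lt.mp (mt (hmem p).mpr hp))
  · rw [sumKLargest, hsort, List.sum_take_ofFn, Finset.sum_map]
    exact le_of_eq (Finset.sum_congr (by ext; simp [Fin.lt_def]) fun _ _ => rfl)

lemma measureReal_sumKLargest_le (ν : Measure ℝ) [IsFiniteMeasure ν] (hk : k < N) (T : ℝ) :
    (Measure.pi fun _ : Fin N => ν).real {x | sumKLargest N k x ≤ T} ≤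
      N * (N - 1).choose k * ∫ s, (Measure.pi fun _ : Fin k => ν).real (upperSlice k s T) *
        ν.real (Set.Iic s) ^ (N - k - 1) ∂ν := by
  set μ := Measure.pi fun _ : Fin N => ν
  set cells := Finset.univ.sigma fun i : Fin N => (Finset.univ.erase i).powersetCard k
  have hcover : {x | sumKLargest N k x ≤ T} ⊆ ⋃ c ∈ cells, orderCell c.1 c.2 T := fun x hx => by
    obtain ⟨i, S, hS, hge, hle, hsum⟩ := exists_mem_orderCell_sumKLargest hk x
    exact Set.mem_biUnion (x := ⟨i, S⟩) (Finset.mem_sigma.mpr ⟨Finset.mem_univ i, hS⟩)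
      ⟨hge, hle, hsum.trans hx⟩
  have hcell : ∀ c ∈ cells, μ.real (orderCell c.1 c.2 T) =
      ∫ s, (Measure.pi fun _ : Fin k => ν).real (upperSlice k s T) *
        ν.real (Set.Iic s) ^ (N - k - 1) ∂ν := by
    rintro ⟨i, S⟩ hc
    obtain ⟨hS, rfl⟩ := Finset.mem_powersetCard.mp (Finset.mem_sigma.mp hc).2
    simpa using measureReal_orderCell ν (Finset.subset_erase.mp hS).2 T
  calc μ.real {x | sumKLargest N k x ≤ T} ≤ μ.real (⋃ c ∈ cells, orderCell c.1 c.2 T) :=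
        measureReal_mono hcover (measure_ne_top _ _)
    _ ≤ ∑ c ∈ cells, μ.real (orderCell c.1 c.2 T) := measureReal_biUnion_finset_le _ _
    _ = _ := by
        rw [Finset.sum_congr rfl hcell]
        simp [cells, Finset.card_sigma]

end LargestCoordinates

section Binomial

lemma sum_neg_one_pow_mul_choose_succ {R : Type*} [CommRing R] (n : ℕ) (φ : ℕ → R) :
    ∑ j ∈ Finset.range (n + 2), (-1) ^ j * (n + 1).choose j * φ j =
      ∑ j ∈ Finset.range (n + 1), (-1) ^ j * n.choose j * (φ j - φ (j + 1)) := by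
  have h := Finset.sum_choose_succ_mul (fun j _ => (-1 : R) ^ j * φ j) n
  rw [← Finset.sum_add_distrib] at h
  convert h using 2 <;> ring

lemma mul_choose_div_factorial {K : Type*} [Field K] [CharZero K] {N k : ℕ} (hk : k < N) :
    (N * (N - 1).choose k / k.factorial : K) =
      N.factorial / ((N - k - 1).factorial * (k.factorial : K) ^ 2) := by
  have hchoose : ((N - 1).choose k * k.factorial * (N - k - 1).factorial : K) =
      (N - 1).factorial := by
    rw [Nat.sub_right_comm]
    exact_mod_cast Nat.choose_mul_factorial_mul_factorial (Nat.le_sub_one_of_lt hk)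
  have hk0 : (k.factorial : K) ≠ 0 := Nat.cast_ne_zero.mpr k.factorial_ne_zero
  have hm0 : ((N - k - 1).factorial : K) ≠ 0 := Nat.cast_ne_zero.mpr (N - k - 1).factorial_ne_zero
  rw [← Nat.mul_factorial_pred (n := N) (by omega), Nat.cast_mul, ← hchoose]
  field_simp

end Binomial

section IrwinHall

/-- The distribution function of the Irwin–Hall law (the sum of `k` independent uniform variables
on `[0, 1]`).  For `k = 0` the summand `0 ^ 0 = 1` makes it the constant `1`, which is the
distribution function only on `[0, ∞)`. -/
noncomputable def irwinHallCDF (k : ℕ) (t : ℝ) : ℝ :=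
  (∑ j ∈ Finset.range (k + 1), (-1 : ℝ) ^ j * k.choose j * max (t - j) 0 ^ k) / k.factorial

/-- The part of the unit cube on which the coordinates sum to at most `t`. -/
def unitCubeSlice (k : ℕ) (t : ℝ) : Set (Fin k → ℝ) :=
  {y | (∀ j, y j ∈ Set.Icc 0 1) ∧ ∑ j, y j ≤ t}

variable {k : ℕ} {t : ℝ}

lemma continuous_irwinHallCDF : Continuous (irwinHallCDF k) := by
  unfold irwinHallCDF
  fun_prop

lemma measurableSet_unitCubeSlice : MeasurableSet (unitCubeSlice k t) := by
  unfold unitCubeSlice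
  measurability

lemma volume_unitCubeSlice_le_one : volume (unitCubeSlice k t) ≤ 1 :=
  calc volume (unitCubeSlice k t) ≤ volume (Set.univ.pi fun _ : Fin k => Set.Icc (0 : ℝ) 1) :=
        measure_mono fun _ hy j _ => hy.1 j
    _ = 1 := by rw [volume_pi_pi]; simp

lemma volume_unitCubeSlice_lt_top : volume (unitCubeSlice k t) < ⊤ :=
  volume_unitCubeSlice_le_one.trans_lt ENNReal.one_lt_top

lemma hasDerivAt_max_zero_pow {n : ℕ} (hn : n ≠ 0) (x : ℝ) :
    HasDerivAt (fun x : ℝ => max x 0 ^ (n + 1)) ((n + 1) * max x 0 ^ n) x := by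
  refine hasDerivAt_of_hasDerivAt_of_ne' (x := 0) (g := fun x => (n + 1) * max x 0 ^ n)
    (fun y hy => ?_) (by fun_prop) (by fun_prop) x
  rcases hy.lt_or_gt with hneg | hpos
  · have hzero : (fun x : ℝ => max x 0 ^ (n + 1)) =ᶠ[nhds y] fun _ => 0 := by
      filter_upwards [Iio_mem_nhds hneg] with x hx
      simp [max_eq_right (Set.mem_Iio.mp hx).le]
    simpa [max_eq_right hneg.le, hn] using (hasDerivAt_const y 0).congr_of_eventuallyEq hzero
  · have hpow : (fun x : ℝ => max x 0 ^ (n + 1)) =ᶠ[nhds y] fun x => x ^ (n + 1) := by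
      filter_upwards [Ioi_mem_nhds hpos] with x hx
      rw [max_eq_left (Set.mem_Ioi.mp hx).le]
    simpa [max_eq_left hpos.le] using (hasDerivAt_pow (n + 1) y).congr_of_eventuallyEq hpow

lemma integral_max_sub_zero_pow {n : ℕ} (hn : n ≠ 0) (a b c : ℝ) :
    ∫ u in a..b, max (c - u) 0 ^ n =
      (max (c - a) 0 ^ (n + 1) - max (c - b) 0 ^ (n + 1)) / (n + 1) := by
  have hint : ∫ x in (c - b)..(c - a), (n + 1 : ℝ) * max x 0 ^ n =
      max (c - a) 0 ^ (n + 1) - max (c - b) 0 ^ (n + 1) :=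
    intervalIntegral.integral_eq_sub_of_hasDerivAt (fun x _ => hasDerivAt_max_zero_pow hn x)
      (Continuous.intervalIntegrable (by fun_prop) _ _)
  rw [intervalIntegral.integral_comp_sub_left (fun x => max x 0 ^ n), eq_div_iff (by positivity),
    ← hint, intervalIntegral.integral_const_mul, mul_comm]

lemma integral_irwinHallCDF_sub (hk : k ≠ 0) (t : ℝ) :
    ∫ u in (0 : ℝ)..1, irwinHallCDF k (t - u) = irwinHallCDF (k + 1) t := by
  unfold irwinHallCDF
  rw [intervalIntegral.integral_div, intervalIntegral.integral_finsetSum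
    fun j _ => Continuous.intervalIntegrable (by fun_prop) _ _]
  simp only [intervalIntegral.integral_const_mul, sub_right_comm t _ (Nat.cast _),
    integral_max_sub_zero_pow hk]
  rw [sum_neg_one_pow_mul_choose_succ, Nat.factorial_succ, Finset.sum_div, Finset.sum_div]
  refine Finset.sum_congr rfl fun j _ => ?_
  push_cast
  rw [sub_zero, sub_sub]
  field_simp

lemma volume_real_unitCubeSlice_succ (k : ℕ) (t : ℝ) :
    volume.real (unitCubeSlice (k + 1) t) =
      ∫ u in (0 : ℝ)..1, volume.real (unitCubeSlice k (t - u)) := by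
  have he := (volume_preserving_piFinSuccAbove (fun _ : Fin (k + 1) => ℝ) 0).symm
  set A := (MeasurableEquiv.piFinSuccAbove (fun _ : Fin (k + 1) => ℝ) 0).symm ⁻¹'
    unitCubeSlice (k + 1) t
  have hfibre (u : ℝ) : Prod.mk u ⁻¹' A =
      if u ∈ Set.Icc 0 1 then unitCubeSlice k (t - u) else ∅ := by
    ext y
    split_ifs with hu
    · simp_all [A, unitCubeSlice, Fin.forall_fin_succ, Fin.sum_univ_succ, le_sub_iff_add_le']
    · exact iff_of_false (fun hy => hu (by simpa [A] using hy.1 0)) (Set.notMem_empty y)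
  have hfin (u : ℝ) : volume (Prod.mk u ⁻¹' A) < ⊤ := by
    rw [hfibre]
    split_ifs
    exacts [volume_unitCubeSlice_lt_top, by simp]
  rw [← he.measureReal_preimage measurableSet_unitCubeSlice.nullMeasurableSet,
    Measure.volume_eq_prod, measureReal_prod_eq_integral _ _
      (he.measurable measurableSet_unitCubeSlice) (.of_forall hfin),
    intervalIntegral.integral_of_le zero_le_one, ← integral_Icc_eq_integral_Ioc,
    ← integral_indicator measurableSet_Icc]
  congr 1 with u
  rw [hfibre]
  split_ifs with hu <;> simp [hu]

lemma volume_real_unitCubeSlice_one (t : ℝ) :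
    volume.real (unitCubeSlice 1 t) = irwinHallCDF 1 t := by
  have hslice : unitCubeSlice 1 t =
      MeasurableEquiv.funUnique (Fin 1) ℝ ⁻¹' Set.Icc 0 (min 1 t) := by
    ext y
    simp [unitCubeSlice, and_assoc]
  rw [hslice]
  refine ((volume_preserving_funUnique (Fin 1) ℝ).measureReal_preimage
    measurableSet_Icc.nullMeasurableSet).trans ?_
  have hcdf : irwinHallCDF 1 t = max t 0 - max (t - 1) 0 := by
    simp [irwinHallCDF, Finset.sum_range_succ, sub_eq_add_neg]
  rw [Real.volume_real_Icc, hcdf]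
  grind

lemma volume_real_unitCubeSlice (hk : k ≠ 0) (t : ℝ) :
    volume.real (unitCubeSlice k t) = irwinHallCDF k t := by
  induction k, Nat.one_le_iff_ne_zero.mpr hk using Nat.le_induction generalizing t with
  | base => exact volume_real_unitCubeSlice_one t
  | succ k hk ih =>
    have hk0 : k ≠ 0 := by omega
    simp only [volume_real_unitCubeSlice_succ, ih hk0, integral_irwinHallCDF_sub hk0]

lemma volume_real_unitCubeSlice_le (k : ℕ) (t : ℝ) :
    volume.real (unitCubeSlice k t) ≤ irwinHallCDF k (max (min t k) 0) := by
  rcases eq_or_ne k 0 with rfl | hk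
  · simpa [irwinHallCDF, Measure.real] using
      ENNReal.toReal_mono ENNReal.one_ne_top volume_unitCubeSlice_le_one
  rw [← volume_real_unitCubeSlice hk]
  refine measureReal_mono (fun y hy => ⟨hy.1, ?_⟩) volume_unitCubeSlice_lt_top.ne
  have hcard : ∑ j, y j ≤ k := by
    simpa using Finset.sum_le_card_nsmul Finset.univ y 1 fun j _ => (hy.1 j).2
  exact le_max_of_le_left (le_min hy.2 hcard)

lemma integrableOn_comp_mul {μ : Measure ℝ} [IsLocallyFiniteMeasure μ] {K : Set ℝ}
    (hK : IsCompact K) {f u q : ℝ → ℝ} {c d : ℝ} (hf : Continuous f) (hu : Measurable u)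
    (hucd : ∀ s, u s ∈ Set.Icc c d) (hq : Continuous q) :
    IntegrableOn (fun s => f (u s) * q s) K μ := by
  obtain ⟨C, hC⟩ := isCompact_Icc.exists_bound_of_continuousOn (hf.continuousOn (s := Set.Icc c d))
  exact (hq.continuousOn.integrableOn_compact hK).bdd_mul
    (hf.measurable.comp hu).aestronglyMeasurable (.of_forall fun s => hC _ (hucd s))

lemma setIntegral_irwinHallCDF_comp_mul {μ : Measure ℝ} [IsLocallyFiniteMeasure μ] {K : Set ℝ}
    (hK : IsCompact K) {u q : ℝ → ℝ} {c d : ℝ} (hu : Measurable u)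
    (hucd : ∀ s, u s ∈ Set.Icc c d) (hq : Continuous q) :
    ∫ s in K, irwinHallCDF k (u s) * q s ∂μ =
      (∑ j ∈ Finset.range (k + 1), (-1 : ℝ) ^ j * k.choose j *
        ∫ s in K, max (u s - j) 0 ^ k * q s ∂μ) / k.factorial := by
  have hint (j : ℕ) : IntegrableOn (fun s => max (u s - j) 0 ^ k * q s) K μ :=
    integrableOn_comp_mul hK (f := fun t => max (t - j) 0 ^ k) (by fun_prop) hu hucd hq
  simp only [← integral_const_mul]
  rw [← integral_finsetSum _ fun j _ => (hint j).const_mul _, ← integral_div]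
  simp only [irwinHallCDF, div_mul_eq_mul_div, Finset.sum_mul, mul_assoc]

end IrwinHall

section UniformLaw

variable {a b s : ℝ} {k : ℕ}

lemma isProbabilityMeasure_unif (hab : a < b) : IsProbabilityMeasure (unif a b) :=
  ProbabilityTheory.cond_isProbabilityMeasure_of_finite (by simpa) (by simp)

lemma integral_unif (hab : a ≤ b) (f : ℝ → ℝ) :
    ∫ x, f x ∂unif a b = 1 / (b - a) * ∫ x in Set.Icc a b, f x := by
  rw [unif, integral_smul_measure, smul_eq_mul]
  simp [hab]

lemma pi_unif {ι : Type*} [Fintype ι] (hab : a < b) :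
    Measure.pi (fun _ : ι => unif a b) =
      (volume (Set.Icc a b))⁻¹ ^ Fintype.card ι •
        volume.restrict (Set.univ.pi fun _ => Set.Icc a b) := by
  have := isProbabilityMeasure_unif hab
  refine Measure.pi_eq fun A _ => ?_
  simp only [unif, volume_pi, Measure.restrict_pi_pi, Measure.smul_apply, smul_eq_mul,
    Measure.pi_pi, Finset.prod_mul_distrib, Finset.prod_const, Finset.card_univ]

lemma measureReal_unif_Iic (hs : s ∈ Set.Icc a b) :
    (unif a b).real (Set.Iic s) = (s - a) / (b - a) := by
  have hinter : Set.Iic s ∩ Set.Icc a b = Set.Icc a s := by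
    ext x
    simp only [Set.mem_inter_iff, Set.mem_Iic, Set.mem_Icc]
    exact ⟨fun h => ⟨h.2.1, h.1⟩, fun h => ⟨h.2, h.1, h.2.trans hs.2⟩⟩
  rw [unif, measureReal_ennreal_smul_apply, measureReal_restrict_apply measurableSet_Iic, hinter]
  simp [hs.1, hs.1.trans hs.2, div_eq_inv_mul]

open scoped Pointwise in
lemma preimage_add_upperSlice_inter_pi_Iic (hsb : s < b) (k : ℕ) (T : ℝ) :
    (fun y : Fin k → ℝ => y + fun _ => s) ⁻¹'
        (upperSlice k s T ∩ Set.univ.pi fun _ => Set.Iic b) =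
      (b - s) • unitCubeSlice k ((T - k * s) / (b - s)) := by
  have hpos : 0 < b - s := sub_pos.mpr hsb
  have hnonneg (x : ℝ) : 0 ≤ x / (b - s) ↔ 0 ≤ x := by rw [le_div_iff₀ hpos, zero_mul]
  ext y
  simp only [upperSlice, unitCubeSlice, Set.mem_preimage, Set.mem_inter_iff, Set.mem_ofPred_eq,
    Set.mem_univ_pi, Set.mem_Iic, Pi.add_apply, Set.mem_smul_set_iff_inv_smul_mem₀ hpos.ne',
    Pi.smul_apply, smul_eq_mul, Set.mem_Icc, ← div_eq_inv_mul, ← Finset.sum_div,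
    div_le_div_iff_of_pos_right hpos, hnonneg, div_le_one hpos,
    Finset.sum_add_distrib, Finset.sum_const, Finset.card_univ, Fintype.card_fin, nsmul_eq_mul,
    le_sub_iff_add_le, le_add_iff_nonneg_left, forall_and]
  tauto

lemma volume_real_upperSlice_inter_pi_Iic (hsb : s < b) (k : ℕ) (T : ℝ) :
    volume.real (upperSlice k s T ∩ Set.univ.pi fun _ => Set.Iic b) =
      (b - s) ^ k * volume.real (unitCubeSlice k ((T - k * s) / (b - s))) := by
  rw [Measure.real, ← measure_preimage_add_right volume (fun _ : Fin k => s),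
    preimage_add_upperSlice_inter_pi_Iic hsb,
    Measure.addHaar_smul_of_nonneg _ (sub_nonneg.mpr hsb.le), ENNReal.toReal_mul,
    ENNReal.toReal_ofReal (by have := sub_pos.mpr hsb; positivity), Module.finrank_fin_fun,
    Measure.real]

lemma measureReal_pi_unif_upperSlice (has : a ≤ s) (hsb : s < b) (k : ℕ) (T : ℝ) :
    (Measure.pi fun _ : Fin k => unif a b).real (upperSlice k s T) =
      ((b - s) / (b - a)) ^ k * volume.real (unitCubeSlice k ((T - k * s) / (b - s))) := by
  have hab : a < b := has.trans_lt hsb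
  have hbox : upperSlice k s T ∩ Set.univ.pi (fun _ => Set.Icc a b) =
      upperSlice k s T ∩ Set.univ.pi (fun _ => Set.Iic b) := by
    ext y
    refine and_congr_right fun hy => forall₂_congr fun j _ => ?_
    exact and_iff_right (has.trans (hy.1 j))
  have hscale : ((volume (Set.Icc a b))⁻¹ ^ k).toReal = (b - a)⁻¹ ^ k := by
    simp [hab.le]
  rw [pi_unif hab, measureReal_ennreal_smul_apply,
    measureReal_restrict_apply measurableSet_upperSlice, hbox,
    volume_real_upperSlice_inter_pi_Iic hsb, Fintype.card_fin, hscale, ← mul_assoc, ← mul_pow,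
    inv_mul_eq_div]

/-- The bound that rescaling `[s, b]` to `[0, 1]` puts on the sum of the `k` rescaled coordinates
when the original ones sum to at most `T`, truncated to the range `[0, k]` of such a sum; the
`max(min((T - ks)/(b - s), k), 0)` of the theorem. -/
noncomputable def sliceLevel (b T : ℝ) (k : ℕ) (s : ℝ) : ℝ :=
  max (min ((T - k * s) / (b - s)) k) 0

lemma sliceLevel_mem_Icc (b T : ℝ) (k : ℕ) (s : ℝ) : sliceLevel b T k s ∈ Set.Icc 0 (k : ℝ) :=
  ⟨le_max_right _ _, max_le (min_le_right _ _) k.cast_nonneg⟩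

lemma measurable_sliceLevel (b T : ℝ) (k : ℕ) : Measurable (sliceLevel b T k) := by
  unfold sliceLevel
  fun_prop

lemma sliceLevel_zero (b T : ℝ) : sliceLevel b T 0 = 0 := by
  ext s
  simp [sliceLevel]

lemma measureReal_pi_unif_upperSlice_mul_le (has : a ≤ s) (hsb : s < b) (k m : ℕ) (T : ℝ) :
    (Measure.pi fun _ : Fin k => unif a b).real (upperSlice k s T) *
        (unif a b).real (Set.Iic s) ^ m ≤
      (1 / (b - a)) ^ (k + m) *
        (irwinHallCDF k (sliceLevel b T k s) * ((s - a) ^ m * (b - s) ^ k)) := by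
  have hsa : 0 ≤ s - a := sub_nonneg.mpr has
  have hbs : 0 ≤ b - s := sub_nonneg.mpr hsb.le
  have hba : 0 ≤ b - a := sub_nonneg.mpr (has.trans hsb.le)
  calc _ = ((b - s) / (b - a)) ^ k *
          volume.real (unitCubeSlice k ((T - k * s) / (b - s))) * ((s - a) / (b - a)) ^ m := by
        rw [measureReal_pi_unif_upperSlice has hsb, measureReal_unif_Iic ⟨has, hsb.le⟩]
    _ ≤ ((b - s) / (b - a)) ^ k * irwinHallCDF k (sliceLevel b T k s) *
          ((s - a) / (b - a)) ^ m :=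
        mul_le_mul_of_nonneg_right (mul_le_mul_of_nonneg_left (volume_real_unitCubeSlice_le k _)
          (pow_nonneg (div_nonneg hbs hba) k)) (pow_nonneg (div_nonneg hsa hba) m)
    _ = _ := by
        rw [div_pow, div_pow, pow_add, one_div_pow, one_div_pow]
        ring

lemma measureReal_pi_unif_sumKLargest_le {N : ℕ} (hab : a < b) (hk : k < N) (T : ℝ) :
    (Measure.pi fun _ : Fin N => unif a b).real {x | sumKLargest N k x ≤ T} ≤
      N * (N - 1).choose k * ((1 / (b - a)) ^ N * ∫ s in Set.Icc a b,
        irwinHallCDF k (sliceLevel b T k s) * ((s - a) ^ (N - k - 1) * (b - s) ^ k)) := by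
  have := isProbabilityMeasure_unif hab
  have hpow : (1 / (b - a)) ^ N = 1 / (b - a) * (1 / (b - a)) ^ (k + (N - k - 1)) := by
    rw [← pow_succ']
    congr 1
    omega
  refine (measureReal_sumKLargest_le (unif a b) hk T).trans ?_
  gcongr
  rw [integral_unif hab.le, hpow, mul_assoc (1 / (b - a)), ← integral_const_mul (_ ^ _)]
  refine mul_le_mul_of_nonneg_left ?_ (one_div_nonneg.mpr (sub_pos.mpr hab).le)
  refine integral_mono_of_nonneg (.of_forall fun s => by positivity)
    ((integrableOn_comp_mul isCompact_Icc continuous_irwinHallCDF (measurable_sliceLevel b T k)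
      (sliceLevel_mem_Icc b T k) (by fun_prop)).const_mul _) ?_
  filter_upwards [ae_restrict_mem measurableSet_Icc, Measure.ae_ne _ b] with s hs hsb
  exact measureReal_pi_unif_upperSlice_mul_le hs.1 (hs.2.lt_of_ne hsb) k (N - k - 1) T

/-- The `k`-th summand of the bound of the theorem, at the level `T`: an upper bound for the
probability that the `k` largest coordinates sum to at most `T`. -/
noncomputable def tailBound (N : ℕ) (a b T : ℝ) (k : ℕ) : ℝ :=
  (N.factorial : ℝ) / ((N - k - 1).factorial * (k.factorial : ℝ) ^ 2) * (1 / (b - a)) ^ N *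
    ∑ j ∈ Finset.range (k + 1), (-1 : ℝ) ^ j * k.choose j *
      ∫ s in Set.Icc a b,
        max (sliceLevel b T k s - j) 0 ^ k * (s - a) ^ (N - k - 1) * (b - s) ^ k

lemma measureReal_pi_unif_sumKLargest_le_tailBound {N : ℕ} (hab : a < b) (hk : k < N) (T : ℝ) :
    (Measure.pi fun _ : Fin N => unif a b).real {x | sumKLargest N k x ≤ T} ≤
      tailBound N a b T k := by
  refine (measureReal_pi_unif_sumKLargest_le hab hk T).trans_eq ?_
  rw [setIntegral_irwinHallCDF_comp_mul isCompact_Icc (measurable_sliceLevel b T k)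
    (sliceLevel_mem_Icc b T k) (by fun_prop), tailBound, ← mul_choose_div_factorial hk]
  simp only [mul_assoc]
  ring

lemma measureReal_pi_unif_lt_firstPassage_le {N : ℕ} (hab : a < b) (hk : k < N) (γ : ℝ) :
    (Measure.pi fun _ : Fin N => unif a b).real
      {x | k < firstPassage (fun j => sumKLargest N j x) N γ} ≤ tailBound N a b γ k := by
  have := isProbabilityMeasure_unif hab
  rcases k.eq_zero_or_pos with rfl | hk0
  -- The bound at `k = 0` does not see the level, so `γ` may be replaced by `0 = M_0`.
  · calc _ ≤ (Measure.pi fun _ : Fin N => unif a b).real {x | sumKLargest N 0 x ≤ 0} :=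
          measureReal_mono fun x _ => by simp [sumKLargest]
      _ ≤ tailBound N a b 0 0 := measureReal_pi_unif_sumKLargest_le_tailBound hab hk 0
      _ = tailBound N a b γ 0 := by simp only [tailBound, sliceLevel_zero]
  · exact (measureReal_mono fun x hx => (lt_of_lt_firstPassage hk0 hx).le).trans
      (measureReal_pi_unif_sumKLargest_le_tailBound hab hk γ)

end UniformLaw

theorem stmt_16_general (N : ℕ) (a b : ℝ) (hab : a < b) (γ : ℝ)
    (P : Measure (Fin N → ℝ)) (hP : P = Measure.pi fun _ => unif a b)
    (kstar : (Fin N → ℝ) → ℕ)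
    (hk : ∀ x, kstar x =
      if ∃ k, (1 ≤ k ∧ k ≤ N) ∧ γ ≤ sumKLargest N k x
      then sInf {k | (1 ≤ k ∧ k ≤ N) ∧ γ ≤ sumKLargest N k x}
      else N)
    (g : ℕ → ℕ → ℝ → ℝ)
    (hg : ∀ k j s, g k j s = max (max (min ((γ - k * s) / (b - s)) (k : ℝ)) 0 - j) 0) :
    ∫ x, (kstar x : ℝ) ∂P ≤
      ∑ k ∈ Finset.range N,
        (N.factorial : ℝ) / (((N - k - 1).factorial : ℝ) * ((k.factorial : ℝ)) ^ 2) *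
          (1 / (b - a)) ^ N *
          ∑ j ∈ Finset.range (k + 1), (-1 : ℝ) ^ j * (k.choose j : ℝ) *
            ∫ s in Set.Icc a b, (g k j s) ^ k * (s - a) ^ (N - k - 1) * (b - s) ^ k := by
  obtain rfl : kstar = fun x => firstPassage (fun k => sumKLargest N k x) N γ := funext hk
  obtain rfl : g = fun k (j : ℕ) s => max (sliceLevel b γ k s - j) 0 := by
    funext k j s
    exact hg k j s
  have := isProbabilityMeasure_unif hab
  subst hP
  calc _ ≤ ∑ k ∈ Finset.range N, (Measure.pi fun _ : Fin N => unif a b).real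
          {x | k < firstPassage (fun j => sumKLargest N j x) N γ} :=
        integral_natCast_le_sum_measureReal_lt _ fun _ => firstPassage_le
    _ ≤ ∑ k ∈ Finset.range N, tailBound N a b γ k := Finset.sum_le_sum fun k hk =>
        measureReal_pi_unif_lt_firstPassage_le hab (Finset.mem_range.mp hk) γ

/-- Upper bound of Theorem 1 (integral form).  For the ordered sequential
estimation scheme, the expected number of transmissions satisfies
`E[k*] ≤ ∑_{k=0}^{N-1} [N!/((N-k-1)!(k!)²)] (1/(b-a))^N ∑_{j=0}^{k} (-1)^j C(k,j)
  ∫_a^b g_{k,j}(s)^k (s-a)^(N-k-1) (b-s)^k ds`,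
where `g_{k,j}(s) = (max(min((γ - ks)/(b - s), k), 0) - j)₊`. -/
theorem stmt_16 (N : ℕ) (hN : 1 ≤ N) (a b : ℝ) (ha : 0 ≤ a) (hab : a < b)
    (γ : ℝ) (hγ : 0 < γ)
    (P : Measure (Fin N → ℝ)) (hP : P = Measure.pi fun _ => unif a b)
    (kstar : (Fin N → ℝ) → ℕ)
    (hk : ∀ x, kstar x =
      if ∃ k, (1 ≤ k ∧ k ≤ N) ∧ γ ≤ sumKLargest N k x
      then sInf {k | (1 ≤ k ∧ k ≤ N) ∧ γ ≤ sumKLargest N k x}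
      else N)
    (g : ℕ → ℕ → ℝ → ℝ)
    (hg : ∀ k j s, g k j s = max (max (min ((γ - k * s) / (b - s)) (k : ℝ)) 0 - j) 0) :
    ∫ x, (kstar x : ℝ) ∂P ≤
      ∑ k ∈ Finset.range N,
        (N.factorial : ℝ) / (((N - k - 1).factorial : ℝ) * ((k.factorial : ℝ)) ^ 2) *
          (1 / (b - a)) ^ N *
          ∑ j ∈ Finset.range (k + 1), (-1 : ℝ) ^ j * (k.choose j : ℝ) *
            ∫ s in Set.Icc a b, (g k j s) ^ k * (s - a) ^ (N - k - 1) * (b - s) ^ k := by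
  exact stmt_16_general N a b hab γ P hP kstar hk g hg
end
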